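/- arXiv:2306.02016 — 2 statements merged into one kernel-verified Lean document; each statement's English description precedes it below -/
import Mathlib

section
/- Let G be a proper real-rational n×n transfer function matrix that is negative imaginary (NI) and has no poles at the origin. Then G(0) = G(0)^T, G(∞) = G(∞)^T, and G(0) ≥ G(∞) in the Loewner (positive-semidefinite) order, where G(∞) = lim_{s→∞} G(s). -/
open Matrix Polynomial Filter Topology
open scoped ComplexOrder

noncomputable section

namespace NIControl

/-- Evaluate a real-rational function at a complex point (junk value at poles). -/
def evalC (f : RatFunc ℝ) (s : ℂ) : ℂ :=
  f.eval (algebraMap ℝ ℂ) s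

/-- `s` is a pole of the real-rational function `f`
(the reduced denominator vanishes at `s`). -/
def IsPoleAt (f : RatFunc ℝ) (s : ℂ) : Prop :=
  f.denom.eval₂ (algebraMap ℝ ℂ) s = 0

variable {n : ℕ}

/-- Pointwise evaluation of a real-rational transfer matrix at a complex point. -/
def evalM (G : Matrix (Fin n) (Fin n) (RatFunc ℝ)) (s : ℂ) : Matrix (Fin n) (Fin n) ℂ :=
  Matrix.of fun i j => evalC (G i j) s

/-- Pointwise evaluation of a real-rational transfer matrix at a real point. -/
def evalR (G : Matrix (Fin n) (Fin n) (RatFunc ℝ)) (x : ℝ) : Matrix (Fin n) (Fin n) ℝ :=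
  Matrix.of fun i j => (G i j).eval (RingHom.id ℝ) x

/-- Value at `s = ∞` of a proper real-rational function. -/
def atInfinity (f : RatFunc ℝ) : ℝ :=
  if f.num.degree = f.denom.degree then f.num.leadingCoeff / f.denom.leadingCoeff else 0

/-- The instantaneous gain `G(∞)` of a proper real-rational transfer matrix. -/
def evalInf (G : Matrix (Fin n) (Fin n) (RatFunc ℝ)) : Matrix (Fin n) (Fin n) ℝ :=
  Matrix.of fun i j => atInfinity (G i j)

/-- The matrix `G` has a pole at `s`. -/
def HasPole (G : Matrix (Fin n) (Fin n) (RatFunc ℝ)) (s : ℂ) : Prop :=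
  ∃ i j, IsPoleAt (G i j) s

/-- All entries of `G` are proper rational functions. -/
def Proper (G : Matrix (Fin n) (Fin n) (RatFunc ℝ)) : Prop :=
  ∀ i j, (G i j).num.degree ≤ (G i j).denom.degree

/-- All entries of `G` are strictly proper rational functions. -/
def StrictlyProper (G : Matrix (Fin n) (Fin n) (RatFunc ℝ)) : Prop :=
  ∀ i j, (G i j).num.degree < (G i j).denom.degree

/-- The pole of `G` at the origin (if any) is at most simple. -/
def NoDoubleOriginPole (G : Matrix (Fin n) (Fin n) (RatFunc ℝ)) : Prop :=
  ∀ i j, (G i j).denom.rootMultiplicity 0 ≤ 1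

/-- Membership in `RH∞`: proper and no poles in the closed right-half complex plane. -/
def MemRHinf {m : Type*} [Fintype m] (G : Matrix m m (RatFunc ℝ)) : Prop :=
  (∀ i j, (G i j).num.degree ≤ (G i j).denom.degree) ∧
  ∀ s : ℂ, 0 ≤ s.re → ∀ i j, ¬ IsPoleAt (G i j) s

/-- The point `jω` on the imaginary axis. -/
def jw (ω : ℝ) : ℂ := Complex.I * (ω : ℂ)

/-- The negative-imaginary frequency kernel `j (M − M*)`. -/
def niKer (M : Matrix (Fin n) (Fin n) ℂ) : Matrix (Fin n) (Fin n) ℂ :=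
  Complex.I • (M - Mᴴ)

/-- Negative imaginary (NI) real-rational transfer matrix. -/
def IsNI (G : Matrix (Fin n) (Fin n) (RatFunc ℝ)) : Prop :=
  Proper G ∧
  (∀ s : ℂ, 0 < s.re → ¬ HasPole G s) ∧
  (∀ ω : ℝ, 0 < ω → ¬ HasPole G (jw ω) → (niKer (evalM G (jw ω))).PosSemidef) ∧
  (∀ ω : ℝ, 0 < ω → HasPole G (jw ω) →
    ∃ R : Matrix (Fin n) (Fin n) ℂ, R.PosSemidef ∧
      Tendsto (fun s : ℂ => (s - jw ω) • Complex.I • evalM G s) (𝓝[≠] jw ω) (𝓝 R)) ∧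
  (HasPole G 0 →
    (∀ k : ℕ, 3 ≤ k → Tendsto (fun s : ℂ => s ^ k • evalM G s) (𝓝[≠] 0) (𝓝 0)) ∧
    ∃ R : Matrix (Fin n) (Fin n) ℂ, R.PosSemidef ∧
      Tendsto (fun s : ℂ => s ^ 2 • evalM G s) (𝓝[≠] 0) (𝓝 R))

/-- Strictly negative imaginary (SNI) real-rational transfer matrix. -/
def IsSNI (G : Matrix (Fin n) (Fin n) (RatFunc ℝ)) : Prop :=
  MemRHinf G ∧ ∀ ω : ℝ, 0 < ω → (niKer (evalM G (jw ω))).PosDef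

/-- Positive real (passive) real-rational transfer matrix. -/
def IsPositiveReal (G : Matrix (Fin n) (Fin n) (RatFunc ℝ)) : Prop :=
  MemRHinf G ∧ ∀ ω : ℝ, 0 ≤ ω → (evalM G (jw ω) + (evalM G (jw ω))ᴴ).PosSemidef

/-- Output strictly passive real-rational transfer matrix. -/
def IsOSP (G : Matrix (Fin n) (Fin n) (RatFunc ℝ)) : Prop :=
  MemRHinf G ∧ ∃ ε : ℝ, 0 < ε ∧ ∀ ω : ℝ, 0 ≤ ω →
    (evalM G (jw ω) + (evalM G (jw ω))ᴴ -
      (ε : ℂ) • ((evalM G (jw ω))ᴴ * evalM G (jw ω))).PosSemidef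

/-- Stability of the positive feedback interconnection `[P, C]`:
`[I; C] (I − P C)⁻¹ [I, P] ∈ RH∞`. -/
def FeedbackStable (P C : Matrix (Fin n) (Fin n) (RatFunc ℝ)) : Prop :=
  ((1 : Matrix (Fin n) (Fin n) (RatFunc ℝ)) - P * C).det ≠ 0 ∧
  MemRHinf (Matrix.fromBlocks
    (1 - P * C)⁻¹ ((1 - P * C)⁻¹ * P)
    (C * (1 - P * C)⁻¹) (C * (1 - P * C)⁻¹ * P))

/-- All eigenvalues of the complex matrix `M` are real and less than `c`. -/
def eigsRealAndLT (M : Matrix (Fin n) (Fin n) ℂ) (c : ℝ) : Prop :=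
  ∀ μ ∈ spectrum ℂ M, μ.im = 0 ∧ μ.re < c

/-- The (real) eigenvalues of the real matrix `M` are all real and its largest
eigenvalue is less than `c`. -/
def maxEigLT (M : Matrix (Fin n) (Fin n) ℝ) (c : ℝ) : Prop :=
  eigsRealAndLT (M.map (Complex.ofReal)) c

/-- Loewner order `A ≤ B` on real matrices. -/
def LoewnerLE (A B : Matrix (Fin n) (Fin n) ℝ) : Prop := (B - A).PosSemidef

/-- Strict Loewner order `A < B` on real matrices. -/
def LoewnerLT (A B : Matrix (Fin n) (Fin n) ℝ) : Prop := (B - A).PosDef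

/-- A polynomial divided by the right power of `s + 1` is bounded on the right half plane. -/
lemma poly_bound (D : ℂ[X]) : ∃ K : ℝ, ∀ s : ℂ, 0 ≤ s.re →
    ‖D.eval s / (s + 1) ^ D.natDegree‖ ≤ K := by
  refine ⟨∑ k ∈ Finset.range (D.natDegree + 1), ‖D.coeff k‖, fun s hs => ?_⟩
  have h1 : 1 ≤ ‖s + 1‖ := by
    have := Complex.re_le_norm (s + 1)
    simp at this
    linarith
  have h2 : ‖s‖ ≤ ‖s + 1‖ := by
    rw [← sq_le_sq₀ (norm_nonneg _) (norm_nonneg _), Complex.sq_norm, Complex.sq_norm,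
      Complex.normSq_apply, Complex.normSq_apply]
    simp
    nlinarith
  rw [norm_div, norm_pow, div_le_iff₀ (by positivity), Polynomial.eval_eq_sum_range]
  refine (norm_sum_le _ _).trans ?_
  rw [Finset.sum_mul]
  refine Finset.sum_le_sum fun k hk => ?_
  rw [norm_mul, norm_pow]
  refine mul_le_mul_of_nonneg_left ?_ (norm_nonneg _)
  calc ‖s‖ ^ k ≤ ‖s + 1‖ ^ k := by gcongr
    _ ≤ ‖s + 1‖ ^ D.natDegree := pow_le_pow_right₀ h1 (by simp at hk; omega)

/-- Near a simple pole on the imaginary axis with nonnegative residue, the real part is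
bounded below in the closed right half plane. -/
lemma re_bddBelow_near (g : ℂ → ℂ) (p : ℂ) (hp : p.re = 0)
    (hd : ∀ᶠ s in 𝓝[≠] p, DifferentiableAt ℂ g s) (a : ℝ) (ha : 0 ≤ a)
    (ht : Tendsto (fun s => (s - p) * g s) (𝓝[≠] p) (𝓝 (a : ℂ))) :
    ∃ C : ℝ, ∀ᶠ s in 𝓝[≠] p, 0 ≤ s.re → -C ≤ (g s).re := by
  classical
  set k : ℂ → ℂ := Function.update (fun s => (s - p) * g s) p (a : ℂ) with hk
  have hkc : ContinuousAt k p := by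
    rw [hk, continuousAt_update_same]; exact ht
  have hkd : ∀ᶠ s in 𝓝[≠] p, DifferentiableAt ℂ k s := by
    filter_upwards [hd, self_mem_nhdsWithin] with s hs hsp
    have hsp' : s ≠ p := hsp
    have : DifferentiableAt ℂ (fun s => (s - p) * g s) s := by fun_prop
    refine this.congr_of_eventuallyEq ?_
    filter_upwards [isOpen_ne.mem_nhds hsp'] with t ht
    exact Function.update_of_ne ht _ _
  have hka := Complex.analyticAt_of_differentiable_on_punctured_nhds_of_continuousAt hkd hkc
  have hO := hka.differentiableAt.isBigO_sub
  obtain ⟨C, hC⟩ := hO.bound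
  refine ⟨C, ?_⟩
  filter_upwards [nhdsWithin_le_nhds hC, self_mem_nhdsWithin] with s hs hsp hre
  have hsp' : s ≠ p := hsp
  have hne : s - p ≠ 0 := sub_ne_zero.mpr hsp'
  rw [hk, Function.update_of_ne hsp', Function.update_self] at hs
  have e : g s = (a : ℂ) / (s - p) + ((s - p) * g s - a) / (s - p) := by
    field_simp
    ring
  have h1 : ‖((s - p) * g s - a) / (s - p)‖ ≤ C := by
    rw [norm_div, div_le_iff₀ (norm_pos_iff.mpr hne)]; exact hs
  have h2 := (abs_le.mp ((Complex.abs_re_le_norm _).trans h1)).1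
  have h3 : 0 ≤ ((a : ℂ) / (s - p)).re := by
    rw [Complex.div_re]
    simp only [Complex.ofReal_re, Complex.ofReal_im, Complex.sub_re, hp, sub_zero, zero_mul,
      zero_div, add_zero]
    exact div_nonneg (mul_nonneg ha hre) (Complex.normSq_nonneg _)
  rw [e, Complex.add_re]
  linarith

lemma eventually_ne_root (D : ℂ[X]) (hD : D ≠ 0) (p : ℂ) :
    ∀ᶠ s in 𝓝[≠] p, D.eval s ≠ 0 := by
  have := Polynomial.eventually_cofinite_not_isRoot hD
  have h2 : 𝓝[≠] p ≤ cofinite := by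
    exact (nhdsNE_le_cofinite p)
  exact h2 this

lemma core (g : ℂ → ℂ) (D : ℂ[X]) (hD : D ≠ 0)
    (hd : ∀ s, D.eval s ≠ 0 → DifferentiableAt ℂ g s)
    (hrhp : ∀ s : ℂ, 0 < s.re → D.eval s ≠ 0)
    (hbd : g =O[Bornology.cobounded ℂ] (fun _ => (1 : ℝ)))
    (him : ∀ ω : ℝ, D.eval (ω * Complex.I) ≠ 0 → 0 ≤ (g (ω * Complex.I)).re)
    (hpole : ∀ ω : ℝ, D.eval (ω * Complex.I) = 0 → ∃ a : ℝ, 0 ≤ a ∧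
      Tendsto (fun s => (s - ω * Complex.I) * g s) (𝓝[≠] (ω * Complex.I)) (𝓝 (a : ℂ))) :
    ∀ s : ℂ, 0 < s.re → 0 ≤ (g s).re := by
  obtain ⟨K, hK⟩ := poly_bound D
  set q : ℂ → ℂ := fun s => D.eval s / (s + 1) ^ D.natDegree with hq
  have hs1 : ∀ s : ℂ, 0 ≤ s.re → s + 1 ≠ 0 := by
    intro s hs h
    have := congrArg Complex.re h
    simp at this
    linarith
  have hqd : ∀ s : ℂ, 0 ≤ s.re → DifferentiableAt ℂ q s := by
    intro s hs
    refine DifferentiableAt.div (Polynomial.differentiableAt D) (by fun_prop)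
      (pow_ne_zero _ (hs1 s hs))
  have hmain : ∀ N : ℕ, ∀ s : ℂ, 0 < s.re → ‖Complex.exp (-(N * g s)) * q s‖ ≤ K := by
    intro N s hs
    set H : ℂ → ℂ := fun s => Complex.exp (-(N * g s)) * q s with hH
    have hHd : ∀ s : ℂ, 0 ≤ s.re → D.eval s ≠ 0 → DifferentiableAt ℂ H s := by
      intro s hs hs'
      have h1 := hd s hs'
      have h2 := hqd s hs
      fun_prop
    have hHb : ∀ C : ℝ, ∀ s : ℂ, 0 ≤ s.re → -C ≤ (g s).re →
        ‖H s‖ ≤ Real.exp (N * C) * ‖q s‖ := by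
      intro C s hs hC
      rw [hH]
      simp only [norm_mul, Complex.norm_exp]
      gcongr
      simp
      nlinarith [(Nat.cast_nonneg N : (0:ℝ) ≤ N)]
    have hcl : closure {z : ℂ | 0 < z.re} = {z : ℂ | 0 ≤ z.re} := Complex.closure_setOfPred_lt_re 0
    have hbdd : ∃ M : ℝ, ∀ᶠ s in Bornology.cobounded ℂ, 0 ≤ s.re → ‖H s‖ ≤ M := by
      obtain ⟨C, hC⟩ := hbd.bound
      refine ⟨Real.exp (N * C) * K, ?_⟩
      filter_upwards [hC] with s hs h0
      simp at hs
      refine (hHb C s h0 (abs_le.mp ((Complex.abs_re_le_norm _).trans hs)).1).trans ?_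
      gcongr
      exact hK s h0
    obtain ⟨M, hM⟩ := hbdd
    refine PhragmenLindelof.right_half_plane_of_bounded_on_real (f := H) (C := K)
      ⟨?_, ?_⟩ ⟨1, by norm_num, 0, ?_⟩ ?_ ?_ hs.le
    · intro s hs
      exact (hHd s (le_of_lt hs) (hrhp s hs)).differentiableWithinAt
    · rw [hcl]
      intro s hs
      have hs : 0 ≤ s.re := hs
      by_cases h0 : D.eval s = 0
      · have hre : s.re = 0 := by
          by_contra hne
          exact hrhp s (lt_of_le_of_ne hs (Ne.symm hne)) h0
        have hsI : s = (s.im : ℝ) * Complex.I := by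
          apply Complex.ext <;> simp [hre]
        obtain ⟨a, ha, hat⟩ := hpole s.im (by rw [← hsI]; exact h0)
        rw [← hsI] at hat
        obtain ⟨C, hC⟩ := re_bddBelow_near g s hre
          ((eventually_ne_root D hD s).mono fun t ht => hd t ht) a ha hat
        have hqs : q s = 0 := by simp [hq, h0]
        have hHs : H s = 0 := by simp [hH, hqs]
        rw [ContinuousWithinAt, hHs]
        have hC' : ∀ᶠ t in 𝓝[{z : ℂ | 0 ≤ z.re}] s, ‖H t‖ ≤ Real.exp (N * C) * ‖q t‖ := by
          rw [eventually_nhdsWithin_iff] at hC ⊢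
          filter_upwards [hC] with t ht ht0
          by_cases hts : t = s
          · rw [hts, hHs, hqs]; simp
          · exact hHb C t ht0 (ht hts ht0)
        refine squeeze_zero_norm' hC' ?_
        have : Tendsto q (𝓝[{z : ℂ | 0 ≤ z.re}] s) (𝓝 (q s)) :=
          (hqd s hs).continuousAt.tendsto.mono_left nhdsWithin_le_nhds
        rw [hqs] at this
        simpa using this.norm.const_mul (Real.exp (N * C))
      · exact (hHd s hs h0).continuousAt.continuousWithinAt
    · refine Asymptotics.IsBigO.of_bound M ?_
      rw [eventually_inf_principal]
      filter_upwards [hM] with t ht ht0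
      simpa using ht (le_of_lt ht0)
    · have ht : Tendsto (fun x : ℝ => (x : ℂ)) atTop (Bornology.cobounded ℂ) := by
        rw [← tendsto_norm_atTop_iff_cobounded]
        simpa using tendsto_abs_atTop_atTop
      refine ⟨M, ?_⟩
      rw [eventually_map]
      filter_upwards [ht.eventually hM, eventually_ge_atTop 0] with x hx hx0
      exact hx (by simpa using hx0)
    · intro ω
      by_cases h0 : D.eval (ω * Complex.I) = 0
      · have : H (ω * Complex.I) = 0 := by simp [hH, hq, h0]
        rw [this, norm_zero]
        exact (norm_nonneg _).trans (hK 0 (by simp))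
      · have := hHb 0 (ω * Complex.I) (by simp) (by simpa using him ω h0)
        simp only [mul_zero, Real.exp_zero, one_mul] at this
        exact this.trans (hK _ (by simp))
  intro s hs
  by_contra hneg
  push Not at hneg
  have hqs : 0 < ‖q s‖ := by
    rw [norm_pos_iff]
    exact div_ne_zero (hrhp s hs) (pow_ne_zero _ (hs1 s hs.le))
  have hlim : Tendsto (fun N : ℕ => Real.exp (N * (-(g s).re)) * ‖q s‖) atTop atTop := by
    refine Tendsto.atTop_mul_const hqs ?_
    refine Real.tendsto_exp_atTop.comp ?_
    exact Tendsto.atTop_mul_const (by linarith) tendsto_natCast_atTop_atTop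
  obtain ⟨N, hN⟩ := (hlim.eventually_gt_atTop K).exists
  have := hmain N s hs
  rw [norm_mul, Complex.norm_exp] at this
  simp at this
  rw [mul_neg] at hN
  linarith

lemma evalC_differentiableAt (f : RatFunc ℝ) (s : ℂ) (h : ¬ IsPoleAt f s) :
    DifferentiableAt ℂ (evalC f) s := by
  have e : evalC f = fun z => (f.num.map (algebraMap ℝ ℂ)).eval z /
      (f.denom.map (algebraMap ℝ ℂ)).eval z := by
    funext z
    simp only [evalC, RatFunc.eval, Polynomial.eval_map]
  rw [e]
  refine DifferentiableAt.div (Polynomial.differentiableAt _) (Polynomial.differentiableAt _) ?_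
  rw [Polynomial.eval_map]
  exact h

lemma eval₂_conj (p : ℝ[X]) (s : ℂ) :
    p.eval₂ (algebraMap ℝ ℂ) ((starRingEnd ℂ) s) =
      (starRingEnd ℂ) (p.eval₂ (algebraMap ℝ ℂ) s) := by
  rw [Polynomial.hom_eval₂]
  congr 1
  ext x
  simp

lemma evalC_conj (f : RatFunc ℝ) (s : ℂ) :
    evalC f ((starRingEnd ℂ) s) = (starRingEnd ℂ) (evalC f s) := by
  simp only [evalC, RatFunc.eval, eval₂_conj, map_div₀]

lemma evalC_zero (f : RatFunc ℝ) :
    evalC f 0 = ((f.eval (RingHom.id ℝ) 0 : ℝ) : ℂ) := by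
  simp [evalC, RatFunc.eval, Polynomial.eval₂_at_zero]

/-- Common denominator of all the entries. -/
def denomProd (G : Matrix (Fin n) (Fin n) (RatFunc ℝ)) : ℂ[X] :=
  ∏ i, ∏ j, (G i j).denom.map (algebraMap ℝ ℂ)

lemma denomProd_ne_zero (G : Matrix (Fin n) (Fin n) (RatFunc ℝ)) : denomProd G ≠ 0 := by
  refine Finset.prod_ne_zero_iff.mpr fun i _ => Finset.prod_ne_zero_iff.mpr fun j _ => ?_
  exact (Polynomial.map_ne_zero_iff (algebraMap ℝ ℂ).injective).mpr (RatFunc.denom_ne_zero _)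

lemma denomProd_eval (G : Matrix (Fin n) (Fin n) (RatFunc ℝ)) (s : ℂ) :
    (denomProd G).eval s = 0 ↔ HasPole G s := by
  simp [denomProd, Polynomial.eval_prod, Finset.prod_eq_zero_iff, HasPole, IsPoleAt,
    Polynomial.eval_map]

lemma hasPole_conj (G : Matrix (Fin n) (Fin n) (RatFunc ℝ)) (s : ℂ) :
    HasPole G ((starRingEnd ℂ) s) ↔ HasPole G s := by
  simp [HasPole, IsPoleAt, eval₂_conj]

lemma cobounded_le_cofinite : Bornology.cobounded ℂ ≤ cofinite := by
  rw [Metric.cobounded_eq_cocompact]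
  exact cocompact_le_cofinite

lemma atInfinity_bigO (f : RatFunc ℝ) (hf : f.num.degree ≤ f.denom.degree) :
    (fun s : ℂ => s * (evalC f s - (atInfinity f : ℂ))) =O[Bornology.cobounded ℂ]
      (fun _ => (1 : ℝ)) := by
  set c := atInfinity f with hc
  have hden := RatFunc.denom_ne_zero f
  have hdeg : (f.num - C c * f.denom).degree < f.denom.degree := by
    by_cases h : f.num.degree = f.denom.degree
    · have hnum : f.num ≠ 0 := by
        intro h0
        rw [h0, Polynomial.degree_zero] at h
        exact hden (Polynomial.degree_eq_bot.mp h.symm)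
      have hc' : c = f.num.leadingCoeff / f.denom.leadingCoeff := by
        rw [hc, atInfinity, if_pos h]
      have hlc : f.denom.leadingCoeff ≠ 0 := Polynomial.leadingCoeff_ne_zero.mpr hden
      have hc0 : c ≠ 0 := by
        rw [hc']
        exact div_ne_zero (Polynomial.leadingCoeff_ne_zero.mpr hnum) hlc
      rw [← h]
      refine Polynomial.degree_sub_lt_left ?_ hnum ?_
      · rw [Polynomial.degree_C_mul hc0, h]
      · rw [Polynomial.leadingCoeff_mul, Polynomial.leadingCoeff_C, hc']
        field_simp
    · have hc' : c = 0 := by rw [hc, atInfinity, if_neg h]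
      rw [hc']
      simpa using lt_of_le_of_ne hf h
  set R := f.num - C c * f.denom with hR
  have hdeg2 : (X * R).degree ≤ f.denom.degree := by
    by_cases hR0 : R = 0
    · simp [hR0]
    · have h1 := Polynomial.natDegree_lt_natDegree hR0 hdeg
      rw [Polynomial.degree_eq_natDegree hden]
      refine Polynomial.degree_le_of_natDegree_le ?_
      rw [Polynomial.natDegree_X_mul hR0]
      omega
  have hO := Polynomial.isBigO_cobounded_of_degree_le
    (P := (X * R).map (algebraMap ℝ ℂ)) (Q := f.denom.map (algebraMap ℝ ℂ))
    (by simpa only [Polynomial.degree_map] using hdeg2)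
  obtain ⟨B, hB⟩ := hO.bound
  have hne : ∀ᶠ s in Bornology.cobounded ℂ, ¬ (f.denom.map (algebraMap ℝ ℂ)).IsRoot s :=
    cobounded_le_cofinite (Polynomial.eventually_cofinite_not_isRoot
      ((Polynomial.map_ne_zero_iff (algebraMap ℝ ℂ).injective).mpr hden))
  refine Asymptotics.IsBigO.of_bound B ?_
  filter_upwards [hB, hne] with s hs hs0
  rw [Polynomial.IsRoot, Polynomial.eval_map] at hs0
  rw [Polynomial.eval_map, Polynomial.eval_map] at hs
  have e : s * (evalC f s - (c : ℂ)) =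
      (X * R).eval₂ (algebraMap ℝ ℂ) s / f.denom.eval₂ (algebraMap ℝ ℂ) s := by
    rw [eq_div_iff hs0, hR, evalC, RatFunc.eval, Polynomial.eval₂_mul, Polynomial.eval₂_sub,
      Polynomial.eval₂_mul, Polynomial.eval₂_X, Polynomial.eval₂_C]
    simp only [Complex.coe_algebraMap] at hs0 ⊢
    field_simp
  rw [e, norm_div, norm_one, mul_one, div_le_iff₀ (norm_pos_iff.mpr hs0)]
  exact hs

lemma atInfinity_tendsto (f : RatFunc ℝ) (hf : f.num.degree ≤ f.denom.degree) :
    Tendsto (evalC f) (Bornology.cobounded ℂ) (𝓝 (atInfinity f : ℂ)) := by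
  obtain ⟨B, hB⟩ := (atInfinity_bigO f hf).bound
  rw [tendsto_iff_norm_sub_tendsto_zero]
  have h1 : Tendsto (fun s : ℂ => B * ‖s‖⁻¹) (Bornology.cobounded ℂ) (𝓝 0) := by
    simpa using (tendsto_inv_atTop_zero.comp (tendsto_norm_cobounded_atTop (E := ℂ))).const_mul B
  refine squeeze_zero' (Eventually.of_forall fun _ => norm_nonneg _) ?_ h1
  filter_upwards [hB, (tendsto_norm_cobounded_atTop (E := ℂ)).eventually_gt_atTop 0] with s hs h0
  rw [norm_mul, norm_one, mul_one] at hs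
  rw [← div_eq_mul_inv, le_div_iff₀ h0, mul_comm]
  exact hs

lemma symm_of_tendsto (G : Matrix (Fin n) (Fin n) (RatFunc ℝ)) (hNI : IsNI G)
    (l : Filter ℝ) [l.NeBot] (hl : ∀ᶠ ω in l, 0 < ω ∧ ¬ HasPole G (jw ω))
    (A : Matrix (Fin n) (Fin n) ℝ)
    (hA : ∀ i j, Tendsto (fun ω => evalC (G i j) (jw ω)) l (𝓝 (A i j : ℂ))) : Aᵀ = A := by
  have hM : Tendsto (fun ω => evalM G (jw ω)) l (𝓝 (A.map Complex.ofReal)) := by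
    refine tendsto_pi_nhds.mpr fun i => ?_
    refine tendsto_pi_nhds.mpr fun j => ?_
    exact hA i j
  have hcont : Continuous (fun M : Matrix (Fin n) (Fin n) ℂ => niKer M) := by
    unfold niKer
    fun_prop
  have hN := (hcont.tendsto _).comp hM
  have hH : (niKer (A.map Complex.ofReal)).IsHermitian := by
    ext i j
    simp [niKer, Matrix.conjTranspose_apply]
    ring
  have hP : (niKer (A.map Complex.ofReal)).PosSemidef := by
    refine Matrix.PosSemidef.of_dotProduct_mulVec_nonneg hH fun x => ?_
    have hq : Continuous (fun M : Matrix (Fin n) (Fin n) ℂ => star x ⬝ᵥ (M *ᵥ x)) := by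
      fun_prop
    refine ge_of_tendsto ((hq.tendsto _).comp hN) ?_
    filter_upwards [hl] with ω hω
    exact (hNI.2.2.1 ω hω.1 hω.2).dotProduct_mulVec_nonneg x
  have htr : (niKer (A.map Complex.ofReal)).trace = 0 := by
    simp [niKer, Matrix.trace, Matrix.conjTranspose_apply]
  have h0 := hP.trace_eq_zero_iff.mp htr
  ext i j
  have := congrFun (congrFun h0 i) j
  simp [niKer, Matrix.conjTranspose_apply, sub_eq_zero] at this
  simpa using this.symm

/-- The scalar quadratic form of a matrix. -/
def qform (x : Fin n → ℝ) (M : Matrix (Fin n) (Fin n) ℂ) : ℂ :=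
  (fun i => (x i : ℂ)) ⬝ᵥ (M *ᵥ fun i => (x i : ℂ))

lemma qform_sum (x : Fin n → ℝ) (M : Matrix (Fin n) (Fin n) ℂ) :
    qform x M = ∑ i, ∑ j, (x i : ℂ) * (M i j * (x j : ℂ)) := by
  simp [qform, dotProduct, Matrix.mulVec, Finset.mul_sum]

lemma qform_nonneg (x : Fin n → ℝ) (M : Matrix (Fin n) (Fin n) ℂ) (hM : M.PosSemidef) :
    0 ≤ qform x M := by
  have := hM.dotProduct_mulVec_nonneg (fun i => (x i : ℂ))
  have e : star (fun i => (x i : ℂ)) = fun i => (x i : ℂ) := by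
    ext i
    simp
  rw [e] at this
  exact this

lemma qform_niKer (x : Fin n → ℝ) (M : Matrix (Fin n) (Fin n) ℂ) :
    qform x (niKer M) = Complex.I * (qform x M - (starRingEnd ℂ) (qform x M)) := by
  have h : (starRingEnd ℂ) (qform x M) = qform x Mᴴ := by
    simp only [qform_sum, map_sum, map_mul, Complex.conj_ofReal, Matrix.conjTranspose_apply]
    rw [Finset.sum_comm]
    refine Finset.sum_congr rfl fun i _ => Finset.sum_congr rfl fun j _ => ?_
    simp only [RCLike.star_def]
    ring
  rw [h]
  simp [qform, niKer, Matrix.smul_mulVec, Matrix.sub_mulVec]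

lemma qform_continuous (x : Fin n → ℝ) :
    Continuous (qform x : Matrix (Fin n) (Fin n) ℂ → ℂ) := by
  unfold qform
  fun_prop

lemma qform_smul (x : Fin n → ℝ) (c : ℂ) (M : Matrix (Fin n) (Fin n) ℂ) :
    qform x (c • M) = c * qform x M := by
  simp [qform, Matrix.smul_mulVec]

lemma qform_conj (x : Fin n → ℝ) (G : Matrix (Fin n) (Fin n) (RatFunc ℝ)) (s : ℂ) :
    qform x (evalM G ((starRingEnd ℂ) s)) = (starRingEnd ℂ) (qform x (evalM G s)) := by
  simp [qform_sum, evalM, evalC_conj]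

lemma qform_sub_nonneg (G : Matrix (Fin n) (Fin n) (RatFunc ℝ)) (hNI : IsNI G)
    (h0 : ¬ HasPole G 0) (x : Fin n → ℝ) :
    0 ≤ x ⬝ᵥ ((evalR G 0 - evalInf G) *ᵥ x) := by
  set c : ℝ := x ⬝ᵥ (evalInf G *ᵥ x) with hc
  have hcs : (c : ℂ) = ∑ i, ∑ j, (x i : ℂ) * ((atInfinity (G i j) : ℂ) * (x j : ℂ)) := by
    simp [hc, dotProduct, Matrix.mulVec, Finset.mul_sum, evalInf]
  set φ : ℂ → ℂ := fun s => qform x (evalM G s) with hφ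
  set g : ℂ → ℂ := fun s => s * (φ s - c) with hg
  have hφd : ∀ s, ¬ HasPole G s → DifferentiableAt ℂ φ s := by
    intro s hs
    simp only [hφ, qform_sum]
    refine DifferentiableAt.fun_sum fun i _ => DifferentiableAt.fun_sum fun j _ => ?_
    have : DifferentiableAt ℂ (fun s => evalM G s i j) s :=
      evalC_differentiableAt (G i j) s fun h => hs ⟨i, j, h⟩
    fun_prop
  have hφconj : ∀ s, φ ((starRingEnd ℂ) s) = (starRingEnd ℂ) (φ s) := qform_conj x G
  have hgconj : ∀ s, g ((starRingEnd ℂ) s) = (starRingEnd ℂ) (g s) := by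
    intro s
    simp [hg, hφconj]
  have hjw : ∀ ω : ℝ, (ω : ℂ) * Complex.I = jw ω := fun ω => by rw [jw, mul_comm]
  have hjwneg : ∀ ω : ℝ, jw ω = (starRingEnd ℂ) (jw (-ω)) := fun ω => by simp [jw]
  have himpos : ∀ ω : ℝ, 0 < ω → ¬ HasPole G (jw ω) → 0 ≤ (g (jw ω)).re := by
    intro ω hω hp
    have h1 := qform_nonneg x _ (hNI.2.2.1 ω hω hp)
    rw [qform_niKer] at h1
    have h2 := (Complex.le_def.mp h1).1
    simp at h2
    have h3 : (φ (jw ω)).im ≤ 0 := by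
      simp only [hφ]
      linarith
    simp [hg, jw] at h3 ⊢
    nlinarith
  have hpolepos : ∀ ω : ℝ, 0 < ω → HasPole G (jw ω) → ∃ a : ℝ, 0 ≤ a ∧
      Tendsto (fun s => (s - jw ω) * g s) (𝓝[≠] (jw ω)) (𝓝 (a : ℂ)) := by
    intro ω hω hp
    obtain ⟨R, hR, ht⟩ := hNI.2.2.2.1 ω hω hp
    have hq := qform_nonneg x R hR
    have hqr : qform x R = ((qform x R).re : ℂ) := by
      apply Complex.ext
      · simp
      · simpa using (Complex.le_def.mp hq).2.symm
    refine ⟨ω * (qform x R).re, mul_nonneg hω.le (Complex.le_def.mp hq).1, ?_⟩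
    have h1 := ((qform_continuous x).tendsto _).comp ht
    have hid : Tendsto (fun s : ℂ => s) (𝓝[≠] (jw ω)) (𝓝 (jw ω)) :=
      tendsto_id.mono_left nhdsWithin_le_nhds
    have h2 : Tendsto (fun s : ℂ => s * (-Complex.I) *
        qform x ((s - jw ω) • Complex.I • evalM G s) - (s - jw ω) * (s * c)) (𝓝[≠] (jw ω))
        (𝓝 (jw ω * (-Complex.I) * qform x R - (jw ω - jw ω) * (jw ω * c))) :=
      ((hid.mul_const _).mul h1).sub ((hid.sub_const _).mul (hid.mul_const _))
    refine (h2.congr fun s => ?_).trans_eq ?_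
    · rw [qform_smul, qform_smul]
      simp only [hg, hφ]
      linear_combination (-(s * (s - jw ω) * qform x (evalM G s))) * Complex.I_mul_I
    · congr 1
      push_cast
      rw [← hqr, jw]
      linear_combination (-(ω * qform x R)) * Complex.I_mul_I
  have hDp : ∀ s, (denomProd G).eval s ≠ 0 ↔ ¬ HasPole G s := fun s => not_congr (denomProd_eval G s)
  have key := core g (denomProd G) (denomProd_ne_zero G) ?_ ?_ ?_ ?_ ?_
  · -- conclude by letting `s → 0+`
    have hpos : ∀ᶠ t : ℝ in 𝓝[>] 0, 0 ≤ (φ t).re - c := by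
      filter_upwards [self_mem_nhdsWithin] with t ht
      have ht : 0 < t := ht
      have := key t (by simpa using ht)
      simp [hg] at this
      by_contra hcon
      push Not at hcon
      nlinarith
    have hlim : Tendsto (fun t : ℝ => (φ t).re - c) (𝓝[>] 0) (𝓝 ((φ 0).re - c)) := by
      have hct : ContinuousAt φ ((0 : ℝ) : ℂ) := by
        simpa using (hφd 0 h0).continuousAt
      have h1 : ContinuousAt (fun t : ℝ => φ t) 0 :=
        ContinuousAt.comp (f := fun t : ℝ => (t : ℂ)) hct Complex.continuous_ofReal.continuousAt
      have h2 := (Complex.continuous_re.continuousAt.comp h1).tendsto.sub_const c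
      simpa using h2.mono_left nhdsWithin_le_nhds
    have hfin := ge_of_tendsto hlim hpos
    have hφ0 : φ 0 = ((x ⬝ᵥ (evalR G 0 *ᵥ x) : ℝ) : ℂ) := by
      simp [hφ, qform_sum, evalM, evalC_zero, dotProduct, Matrix.mulVec, Finset.mul_sum, evalR]
    rw [hφ0, Complex.ofReal_re] at hfin
    rw [Matrix.sub_mulVec, dotProduct_sub]
    exact hfin
  · intro s hs
    have := hφd s ((hDp s).mp hs)
    fun_prop
  · intro s hs
    exact (hDp s).mpr (hNI.2.1 s hs)
  · have e : g = fun s => ∑ i, ∑ j, ((x i : ℂ) * (x j : ℂ)) *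
        (s * (evalC (G i j) s - (atInfinity (G i j) : ℂ))) := by
      funext s
      simp only [hg, hφ, hcs, qform_sum, ← Finset.sum_sub_distrib, Finset.mul_sum]
      refine Finset.sum_congr rfl fun i _ => Finset.sum_congr rfl fun j _ => ?_
      simp only [evalM, Matrix.of_apply]
      ring
    rw [e]
    refine Asymptotics.IsBigO.fun_sum fun i _ => Asymptotics.IsBigO.fun_sum fun j _ => ?_
    exact (atInfinity_bigO (G i j) (hNI.1 i j)).const_mul_left _
  · intro ω hω
    rw [hjw] at hω ⊢
    have hω := (hDp _).mp hω
    rcases lt_trichotomy ω 0 with h | h | h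
    · rw [hjwneg, hgconj, Complex.conj_re]
      refine himpos (-ω) (by linarith) ?_
      rw [hjwneg, hasPole_conj] at hω
      exact hω
    · simp [h, hg, jw]
    · exact himpos ω h hω
  · intro ω hω
    rw [hjw] at hω ⊢
    have hω := (denomProd_eval G _).mp hω
    rcases lt_trichotomy ω 0 with h | h | h
    · rw [hjwneg, hasPole_conj] at hω
      obtain ⟨a, ha, hat⟩ := hpolepos (-ω) (by linarith) hω
      refine ⟨a, ha, ?_⟩
      have hm : Tendsto (starRingEnd ℂ) (𝓝[≠] (jw ω)) (𝓝[≠] (jw (-ω))) := by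
        refine tendsto_nhdsWithin_iff.mpr ⟨?_, ?_⟩
        · have := (Complex.continuous_conj.tendsto (jw ω)).mono_left
            (nhdsWithin_le_nhds (s := {jw ω}ᶜ))
          simpa [hjwneg ω] using this
        · filter_upwards [self_mem_nhdsWithin] with s hs hs'
          apply hs
          have hs' : (starRingEnd ℂ) s = jw (-ω) := hs'
          simp [hjwneg ω, ← hs']
      have h1 := (Complex.continuous_conj.tendsto _).comp (hat.comp hm)
      rw [Complex.conj_ofReal] at h1
      refine h1.congr fun s => ?_
      simp [hgconj, hjwneg ω]
    · exfalso
      apply h0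
      simpa [h, jw] using hω
    · exact hpolepos ω h hω

/-- static and instantaneous gains of an NI system without poles
at the origin: `G(0) = G(0)ᵀ`, `G(∞) = G(∞)ᵀ` and `G(0) ≥ G(∞)`. -/
theorem ni_static_and_instantaneous_gains {n : ℕ} (G : Matrix (Fin n) (Fin n) (RatFunc ℝ))
    (hNI : IsNI G) (h0 : ¬ HasPole G 0) :
    (evalR G 0)ᵀ = evalR G 0 ∧ (evalInf G)ᵀ = evalInf G ∧
      (evalR G 0 - evalInf G).PosSemidef := by
  have hjc : Continuous jw := by
    unfold jw
    fun_prop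
  have s0 : (evalR G 0)ᵀ = evalR G 0 := by
    have hj0 : Tendsto jw (𝓝[>] 0) (𝓝 0) := by
      have := (hjc.tendsto 0).mono_left (nhdsWithin_le_nhds (s := Set.Ioi 0))
      simpa [jw] using this
    refine symm_of_tendsto G hNI (𝓝[>] 0) ?_ _ fun i j => ?_
    · have hD : (denomProd G).eval 0 ≠ 0 := fun h => h0 ((denomProd_eval G 0).mp h)
      have h1 : ∀ᶠ s in 𝓝 (0 : ℂ), (denomProd G).eval s ≠ 0 :=
        (denomProd G).continuous.continuousAt.eventually_ne hD
      filter_upwards [self_mem_nhdsWithin, hj0.eventually h1] with ω hω h2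
      exact ⟨hω, fun h => h2 ((denomProd_eval G _).mpr h)⟩
    · have h1 := (evalC_differentiableAt (G i j) 0 fun h => h0 ⟨i, j, h⟩).continuousAt.tendsto
      rw [evalC_zero] at h1
      exact h1.comp hj0
  have sI : (evalInf G)ᵀ = evalInf G := by
    have hjI : Tendsto jw atTop (Bornology.cobounded ℂ) := by
      rw [← tendsto_norm_atTop_iff_cobounded]
      simpa [jw] using tendsto_abs_atTop_atTop
    refine symm_of_tendsto G hNI atTop ?_ _ fun i j => ?_
    · have h1 := cobounded_le_cofinite
        (Polynomial.eventually_cofinite_not_isRoot (denomProd_ne_zero G))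
      filter_upwards [eventually_gt_atTop 0, hjI.eventually h1] with ω hω h2
      exact ⟨hω, fun h => h2 ((denomProd_eval G _).mpr h)⟩
    · exact (atInfinity_tendsto (G i j) (hNI.1 i j)).comp hjI
  refine ⟨s0, sI, Matrix.PosSemidef.of_dotProduct_mulVec_nonneg ?_ fun x => ?_⟩
  · rw [Matrix.IsHermitian, Matrix.conjTranspose_eq_transpose_of_trivial, Matrix.transpose_sub,
      s0, sI]
  · simpa using qform_sub_nonneg G hNI h0 x

end NIControl
end
end

section
/- Let G be a real-rational n×n transfer function matrix that is strictly negative imaginary (SNI). Then G(0) > G(∞) in the Loewner order (G(0) − G(∞) is positive definite), where G(∞) = lim_{s→∞} G(s). -/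
open Matrix Polynomial Filter Topology
open scoped ComplexOrder

noncomputable section

namespace NIControl

variable {n : ℕ}

/-- Polynomial evaluation is analytic. -/
lemma analyticAt_eval₂ (p : ℝ[X]) (s : ℂ) :
    AnalyticAt ℂ (fun z : ℂ => p.eval₂ (algebraMap ℝ ℂ) z) s := by
  have := (analyticAt_id (𝕜 := ℂ) (z := s)).aeval_polynomial p
  simpa [Polynomial.aeval_def] using this

lemma analyticAt_evalC (f : RatFunc ℝ) (s : ℂ) (h : ¬ IsPoleAt f s) :
    AnalyticAt ℂ (evalC f) s := by
  unfold IsPoleAt at h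
  exact (analyticAt_eval₂ f.num s).div (analyticAt_eval₂ f.denom s) h

lemma atInfinity_eq (f : RatFunc ℝ) (h : f.num.degree ≤ f.denom.degree) :
    atInfinity f = f.num.coeff f.denom.natDegree / f.denom.coeff f.denom.natDegree := by
  unfold atInfinity
  split_ifs with h1
  · rw [← Polynomial.natDegree_eq_of_degree_eq h1]
    rw [Polynomial.leadingCoeff, Polynomial.leadingCoeff, Polynomial.natDegree_eq_of_degree_eq h1]
  · have h2 : f.num.degree < f.denom.degree := lt_of_le_of_ne h h1
    rw [Polynomial.coeff_eq_zero_of_degree_lt, zero_div]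
    rwa [← Polynomial.degree_eq_natDegree f.denom_ne_zero]

lemma tendsto_evalC (f : RatFunc ℝ) (h : f.num.degree ≤ f.denom.degree) :
    Tendsto (evalC f) (Bornology.cobounded ℂ) (𝓝 (atInfinity f : ℂ)) := by
  set N := f.denom.natDegree with hN
  have hnum : f.num.natDegree ≤ N := Polynomial.natDegree_le_natDegree h
  have key : Tendsto (fun t : ℂ => (f.num.reflect N).eval₂ (algebraMap ℝ ℂ) t /
      (f.denom.reflect N).eval₂ (algebraMap ℝ ℂ) t) (𝓝 0) (𝓝 (atInfinity f : ℂ)) := by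
    have hd : (f.denom.reflect N).eval₂ (algebraMap ℝ ℂ) 0 = (f.denom.coeff N : ℂ) := by
      simp [Polynomial.eval₂_at_zero, Polynomial.coeff_reflect, Polynomial.revAt_le]
    have hn : (f.num.reflect N).eval₂ (algebraMap ℝ ℂ) 0 = (f.num.coeff N : ℂ) := by
      simp [Polynomial.eval₂_at_zero, Polynomial.coeff_reflect, Polynomial.revAt_le]
    have hne : (f.denom.reflect N).eval₂ (algebraMap ℝ ℂ) 0 ≠ 0 := by
      rw [hd, hN]
      have : f.denom.leadingCoeff ≠ 0 := by simpa using f.denom_ne_zero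
      exact_mod_cast this
    have := ((analyticAt_eval₂ (f.num.reflect N) 0).continuousAt.div
      (analyticAt_eval₂ (f.denom.reflect N) 0).continuousAt hne).tendsto
    rw [atInfinity_eq f h]
    push_cast
    rw [← hN, ← hd, ← hn]
    exact this
  have := key.comp (Filter.tendsto_inv₀_cobounded (α := ℂ))
  refine this.congr' ?_
  have hnz : ∀ᶠ s : ℂ in Bornology.cobounded ℂ, s ≠ 0 := by
    have hb : Bornology.IsBounded ({0} : Set ℂ) := Bornology.isBounded_singleton
    exact hb
  filter_upwards [hnz] with s hs
  let _ := invertibleOfNonzero hs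
  have e1 := Polynomial.eval₂_reflect_mul_pow (algebraMap ℝ ℂ) s N f.num hnum
  have e2 := Polynomial.eval₂_reflect_mul_pow (algebraMap ℝ ℂ) s N f.denom le_rfl
  simp only [Function.comp, evalC, RatFunc.eval, ← e1, ← e2, invOf_eq_inv]
  rw [mul_div_mul_right _ _ (pow_ne_zero _ hs)]

lemma evalC_real (f : RatFunc ℝ) (x : ℝ) :
    evalC f (x : ℂ) = ((f.eval (RingHom.id ℝ) x : ℝ) : ℂ) := by
  have : ∀ p : ℝ[X], p.eval₂ (algebraMap ℝ ℂ) (x : ℂ) = ((p.eval₂ (RingHom.id ℝ) x : ℝ) : ℂ) := by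
    intro p
    rw [Polynomial.eval₂_id]
    exact Polynomial.eval₂_at_apply (algebraMap ℝ ℂ) x
  simp [evalC, RatFunc.eval, this]

lemma scalar_ineq (g : ℂ → ℂ) (hg : AnalyticOnNhd ℂ g {z | 0 ≤ z.re}) (c : ℝ)
    (hlim : Tendsto g (Bornology.cobounded ℂ) (𝓝 (c : ℂ)))
    (hreal : ∀ x : ℝ, (g x).im = 0)
    (him : ∀ ω : ℝ, 0 < ω → (g (jw ω)).im < 0) : c < (g 0).re := by
  -- the imaginary part is nonpositive on the first quadrant
  have hquad : ∀ z : ℂ, 0 ≤ z.re → 0 ≤ z.im → (g z).im ≤ 0 := by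
    intro z hz1 hz2
    have hn : ∀ w, ‖Complex.exp (-Complex.I * g w)‖ = Real.exp (g w).im := by
      intro w; rw [Complex.norm_exp]; simp
    have := PhragmenLindelof.quadrant_I (f := fun w => Complex.exp (-Complex.I * g w)) (C := 1)
      (z := z) ?_ ?_ ?_ ?_ hz1 hz2
    · rw [hn] at this
      simpa using this
    · apply DifferentiableOn.diffContOnCl
      intro w hw
      have hw' : 0 ≤ w.re := by
        rw [Complex.closure_reProdIm] at hw
        simpa using hw.1
      exact ((hg w hw').differentiableAt.const_mul _).cexp.differentiableWithinAt
    · refine ⟨0, by norm_num, 0, ?_⟩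
      have h1 : Tendsto (fun w => Complex.exp (-Complex.I * g w)) (Bornology.cobounded ℂ)
          (𝓝 (Complex.exp (-Complex.I * c))) :=
        (Complex.continuous_exp.tendsto _).comp (hlim.const_mul _)
      simpa using (h1.mono_left inf_le_left).isBigO_one ℝ
    · intro x _
      rw [hn, hreal, Real.exp_zero]
    · intro x hx
      rw [hn]
      rcases hx.eq_or_lt with rfl | hx
      · have := hreal 0
        simp at this
        simp [this]
      · have := him x hx
        rw [jw, mul_comm] at this
        simpa using this.le
  set h : ℝ → ℝ := fun x => (g x).re with hh
  have hder : ∀ x : ℝ, 0 ≤ x → HasDerivAt h (deriv g x).re x := by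
    intro x hx
    exact ((hg x (by simpa using hx)).differentiableAt.hasDerivAt).real_of_complex
  have hneg : ∀ x : ℝ, 0 ≤ x → (deriv g x).re ≤ 0 := by
    intro x hx
    have hd := (hg x (by simpa using hx)).differentiableAt.hasDerivAt
    -- y ↦ Im g (x + i y)
    have hline : HasDerivAt (fun y : ℂ => -Complex.I * g (x + Complex.I * y))
        (-Complex.I * (deriv g x * Complex.I)) ((0:ℝ):ℂ) := by
      have h2 : HasDerivAt (fun y : ℂ => (x:ℂ) + Complex.I * y) Complex.I ((0:ℝ):ℂ) := by
        simpa using ((hasDerivAt_id ((0:ℝ):ℂ)).const_mul Complex.I).const_add (x:ℂ)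
      have h3 : HasDerivAt g (deriv g x) ((x:ℂ) + Complex.I * ((0:ℝ):ℂ)) := by simpa using hd
      exact (HasDerivAt.comp (h := fun y : ℂ => (x:ℂ) + Complex.I * y) ((0:ℝ):ℂ) h3 h2).const_mul _
    have hr := hline.real_of_complex
    have e : (-Complex.I * (deriv g x * Complex.I)).re = (deriv g x).re := by
      simp
    rw [e] at hr
    refine le_of_tendsto ((hasDerivWithinAt_iff_tendsto_slope' (s := Set.Ioi 0) (by simp)).1
      hr.hasDerivWithinAt) ?_
    filter_upwards [self_mem_nhdsWithin] with y hy
    have hy' : (0:ℝ) < y := hy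
    have q := hquad (x + Complex.I * y) (by simpa using hx) (by simpa using hy'.le)
    rw [slope_def_field]
    apply div_nonpos_of_nonpos_of_nonneg
    · simpa [hreal] using q
    · simpa using hy'.le
  have hanti : AntitoneOn h (Set.Ici 0) := by
    apply antitoneOn_of_deriv_nonpos (convex_Ici 0)
    · intro x hx
      exact (hder x hx).continuousAt.continuousWithinAt
    · intro x hx
      rw [interior_Ici] at hx
      exact (hder x (le_of_lt hx)).differentiableAt.differentiableWithinAt
    · intro x hx
      rw [interior_Ici] at hx
      rw [(hder x (le_of_lt hx)).deriv]
      exact hneg x (le_of_lt hx)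
  have hlimR : Tendsto h atTop (𝓝 c) := by
    have h1 : Tendsto (fun x : ℝ => (x : ℂ)) atTop (Bornology.cobounded ℂ) := by
      rw [← tendsto_norm_atTop_iff_cobounded]
      simpa using tendsto_abs_atTop_atTop
    have := (Complex.continuous_re.tendsto _).comp (hlim.comp h1)
    exact this
  have hge : ∀ x : ℝ, 0 ≤ x → c ≤ h x := by
    intro x hx
    refine le_of_tendsto hlimR ?_
    filter_upwards [eventually_ge_atTop x] with y hy
    exact hanti hx (hx.trans hy) hy
  have h0 : (g 0).re = h 0 := by simp [hh]
  rw [h0]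
  refine lt_of_le_of_ne (hge 0 le_rfl) ?_
  intro heq
  have hconst : ∀ x : ℝ, 0 ≤ x → g x = c := by
    intro x hx
    apply Complex.ext
    · refine le_antisymm ?_ (hge x hx)
      have := hanti (Set.self_mem_Ici) hx hx
      rw [← heq] at this
      simpa using this
    · simp [hreal]
  have hfreq : ∃ᶠ z : ℂ in 𝓝[≠] ((1:ℝ):ℂ), g z = c := by
    have ht : Tendsto (fun x : ℝ => (x:ℂ)) (𝓝[>] 1) (𝓝[≠] ((1:ℝ):ℂ)) := by
      refine tendsto_nhdsWithin_iff.2 ⟨?_, ?_⟩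
      · exact (Complex.continuous_ofReal.tendsto 1).mono_left nhdsWithin_le_nhds
      · filter_upwards [self_mem_nhdsWithin] with x hx
        have hx' : (1:ℝ) < x := hx
        simpa using hx'.ne'
    refine ht.frequently (Eventually.frequently ?_)
    filter_upwards [self_mem_nhdsWithin] with x hx
    have hx' : (1:ℝ) < x := hx
    exact hconst x (by linarith)
  have hE := hg.eqOn_of_preconnected_of_frequently_eq (g := fun _ => (c:ℂ)) analyticOnNhd_const
    (convex_halfSpace_re_ge 0).isPreconnected (z₀ := ((1:ℝ):ℂ)) (by simp) hfreq
  have h1 := him 1 one_pos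
  have h2 : g (jw 1) = c := hE (by simp [jw])
  rw [h2] at h1
  simp at h1

lemma symm_of_tendsto_s1 {n : ℕ} (G : Matrix (Fin n) (Fin n) (RatFunc ℝ))
    (hpos : ∀ ω : ℝ, 0 < ω → (niKer (evalM G (jw ω))).PosDef)
    (l : Filter ℝ) [l.NeBot] (hl : ∀ᶠ ω in l, 0 < ω) (M : Matrix (Fin n) (Fin n) ℝ)
    (hM : Tendsto (fun ω => evalM G (jw ω)) l (𝓝 (M.map Complex.ofReal))) : Mᵀ = M := by
  have hker : (niKer (M.map Complex.ofReal)).PosSemidef := by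
    apply PosSemidef.of_dotProduct_mulVec_nonneg
    · unfold niKer Matrix.IsHermitian
      ext i j
      simp
      ring
    · intro z
      have hc : Continuous (fun A : Matrix (Fin n) (Fin n) ℂ => star z ⬝ᵥ (niKer A *ᵥ z)) := by
        unfold niKer
        fun_prop
      have ht := (hc.tendsto _).comp hM
      refine ge_of_tendsto ht ?_
      filter_upwards [hl] with ω hω
      exact (hpos ω hω).posSemidef.dotProduct_mulVec_nonneg z
  have htr : (niKer (M.map Complex.ofReal)).trace = 0 := by
    simp [niKer, Matrix.trace]
  have hz := hker.trace_eq_zero_iff.1 htr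
  ext i j
  have := congrFun (congrFun hz j) i
  simp [niKer, sub_eq_zero] at this
  rw [Matrix.transpose_apply]
  exact this

lemma tendsto_jw_cobounded : Tendsto jw atTop (Bornology.cobounded ℂ) := by
  rw [← tendsto_norm_atTop_iff_cobounded]
  simpa [jw] using tendsto_abs_atTop_atTop

/-- for an SNI system, `G(0) > G(∞)` in the Loewner order. -/
theorem sni_static_gain_exceeds_instantaneous_gain {n : ℕ} (G : Matrix (Fin n) (Fin n) (RatFunc ℝ))
    (hSNI : IsSNI G) :
    (evalR G 0 - evalInf G).PosDef := by
  obtain ⟨⟨hprop, hpole⟩, hpos⟩ := hSNI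
  have hsym0 : (evalR G 0)ᵀ = evalR G 0 := by
    refine symm_of_tendsto_s1 G hpos (𝓝[>] 0) self_mem_nhdsWithin _ ?_
    refine tendsto_pi_nhds.2 fun i => tendsto_pi_nhds.2 fun j => ?_
    have hc : ContinuousAt (evalC (G i j)) (jw 0) :=
      (analyticAt_evalC (G i j) (jw 0) (hpole _ (by simp [jw]) i j)).continuousAt
    have hj : Continuous jw := by unfold jw; fun_prop
    have ht := (hc.tendsto.comp (hj.tendsto 0)).mono_left (nhdsWithin_le_nhds (s := Set.Ioi 0))
    have e : evalC (G i j) (jw 0) = ((evalR G 0).map Complex.ofReal) i j := by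
      have := evalC_real (G i j) 0
      simpa [jw, evalR] using this
    rw [e] at ht
    exact ht
  have hsymI : (evalInf G)ᵀ = evalInf G := by
    refine symm_of_tendsto_s1 G hpos atTop (eventually_gt_atTop 0) _ ?_
    refine tendsto_pi_nhds.2 fun i => tendsto_pi_nhds.2 fun j => ?_
    exact (tendsto_evalC (G i j) (hprop i j)).comp tendsto_jw_cobounded
  apply PosDef.of_dotProduct_mulVec_pos
  · rw [Matrix.IsHermitian, conjTranspose_eq_transpose_of_trivial, transpose_sub, hsym0, hsymI]
  intro x hx
  have key := scalar_ineq (fun s => ∑ i, ∑ j, (x i : ℂ) * evalC (G i j) s * (x j : ℂ)) ?_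
    (∑ i, ∑ j, x i * atInfinity (G i j) * x j) ?_ ?_ ?_
  · have e0 : ∀ i j, evalC (G i j) 0 = (((G i j).eval (RingHom.id ℝ) 0 : ℝ) : ℂ) := by
      intro i j
      simpa using evalC_real (G i j) 0
    simp only [e0, ← Complex.ofReal_mul, ← Complex.ofReal_sum, Complex.ofReal_re] at key
    have := sub_pos.2 key
    simp only [← Finset.sum_sub_distrib] at this
    refine lt_of_lt_of_eq this (Eq.symm ?_)
    simp only [dotProduct, mulVec, Finset.mul_sum, evalR, evalInf, Matrix.sub_apply, of_apply]
    refine Finset.sum_congr rfl fun i _ => Finset.sum_congr rfl fun j _ => ?_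
    simp
    ring
  · intro s hs
    refine Finset.analyticAt_fun_sum _ fun i _ => Finset.analyticAt_fun_sum _ fun j _ => ?_
    exact (analyticAt_const.mul (analyticAt_evalC _ _ (hpole s hs i j))).mul analyticAt_const
  · push_cast
    refine tendsto_finsetSum _ fun i _ => tendsto_finsetSum _ fun j _ => ?_
    exact ((tendsto_evalC _ (hprop i j)).const_mul _).mul_const _
  · intro t
    simp only [evalC_real, ← Complex.ofReal_mul, ← Complex.ofReal_sum, Complex.ofReal_im]
  · intro ω hω
    have hx' : (fun i => (x i : ℂ)) ≠ 0 := by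
      intro h
      apply hx
      ext i
      simpa using congrFun h i
    have hp := (hpos ω hω).dotProduct_mulVec_pos hx'
    have e : star (fun i => (x i : ℂ)) ⬝ᵥ (niKer (evalM G (jw ω)) *ᵥ (fun i => (x i : ℂ))) =
        Complex.I * ((∑ i, ∑ j, (x i : ℂ) * evalC (G i j) (jw ω) * (x j : ℂ)) -
          (starRingEnd ℂ) (∑ i, ∑ j, (x i : ℂ) * evalC (G i j) (jw ω) * (x j : ℂ))) := by
      simp only [map_sum, map_mul, Complex.conj_ofReal]
      rw [Finset.sum_comm (f := fun i j => (x i : ℂ) * (starRingEnd ℂ) (evalC (G i j) (jw ω)) * (x j : ℂ))]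
      simp only [← Finset.sum_sub_distrib, Finset.mul_sum, dotProduct, mulVec]
      refine Finset.sum_congr rfl fun i _ => Finset.sum_congr rfl fun j _ => ?_
      simp [niKer, evalM]
      ring
    rw [e, Complex.sub_conj] at hp
    have := (Complex.lt_def.1 hp).1
    simp at this
    simp
    linarith

end NIControl
end
end
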